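/- Let ℓ ≥ 2 and n = 3ℓ. A composition c of n is maximal if and only if c = (3^ℓ) (ℓ parts equal to 3) or c = (4, 3^{ℓ−2}, 2) (a 4, followed by ℓ−2 parts equal to 3, followed by a 2). -/

import Mathlib

/-- `i` (1-based, with `1 < i < n`) is a peak of the permutation `σ` of `{1,…,n}`
(represented as a permutation of `Fin n`, position `j` (1-based) being index `j-1`). -/
def IsPeak {n : ℕ} (σ : Equiv.Perm (Fin n)) (i : ℕ) : Prop :=
  ∃ (h₂ : 2 ≤ i) (h₃ : i < n),
    σ ⟨i - 2, by omega⟩ < σ ⟨i - 1, by omega⟩ ∧ σ ⟨i, h₃⟩ < σ ⟨i - 1, by omega⟩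

open Classical in
/-- The peak set of a permutation of `{1,…,n}` (as a set of 1-based positions). -/
noncomputable def peakSet {n : ℕ} (σ : Equiv.Perm (Fin n)) : Finset ℕ :=
  (Finset.range n).filter (fun i => IsPeak σ i)

/-- `P(S;n)`: the number of permutations of `{1,…,n}` with peak set `S`. -/
noncomputable def numPeakSet (n : ℕ) (S : Finset ℕ) : ℕ :=
  Nat.card {σ : Equiv.Perm (Fin n) // peakSet σ = S}

/-- `c` is a composition of `n`: a list of positive integers summing to `n`. -/
def IsComposition (n : ℕ) (c : List ℕ) : Prop :=
  (∀ x ∈ c, 0 < x) ∧ c.sum = n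

/-- The set `S(c)` of proper partial sums of the composition `c`. -/
def compPeaks (c : List ℕ) : Finset ℕ :=
  (Finset.range (c.length - 1)).image (fun i => (c.take (i + 1)).sum)

/-- `P(c)`: the number of permutations of `{1,…,|c|}` whose peak set is `S(c)`. -/
noncomputable def Pcomp (c : List ℕ) : ℕ :=
  numPeakSet c.sum (compPeaks c)

/-- A composition is maximal if `P(b) ≤ P(c)` for every composition `b` of the same size. -/
def IsMaximal (c : List ℕ) : Prop :=
  ∀ b : List ℕ, IsComposition c.sum b → Pcomp b ≤ Pcomp c

namespace PeakMax

/-- Sum of `φ a r` over all decompositions `β = a ++ true :: r`. -/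
def sp : List Bool → (List Bool → List Bool → ℝ) → ℝ
  | [], _ => 0
  | b :: l, φ => (if b then φ [] l else 0) + sp l (fun a r => φ (b :: a) r)

/-- Contribution of the first letter. -/
def fstT (g : List Bool → ℝ) : List Bool → ℝ
  | false :: l => g l
  | _ => 0

/-- Contribution of the last letter. -/
def lstT (g : List Bool → ℝ) (l : List Bool) : ℝ := fstT (fun l => g l.reverse) l.reverse

/-- Probability of a peak word, with fuel. -/
noncomputable def hN : ℕ → List Bool → ℝ
  | 0, _ => 0
  | k + 1, β => if β.length = 0 then 0 else
      if β.length = 1 then (if β = [false] then 1 else 0) else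
      (sp β (fun a r => hN k a * hN k r) + fstT (hN k) β + lstT (hN k) β) / β.length

/-- Probability of a peak word. -/
noncomputable def h (β : List Bool) : ℝ := hN β.length β

lemma sp_append (x y : List Bool) (φ : List Bool → List Bool → ℝ) :
    sp (x ++ y) φ = sp x (fun a r => φ a (r ++ y)) + sp y (fun a r => φ (x ++ a) r) := by
  induction x generalizing φ with
  | nil => simp [sp]
  | cons b x ih => simp [sp, ih, add_assoc]

lemma sp_le (x : List Bool) (φ ψ : List Bool → List Bool → ℝ)
    (H : ∀ a r, x = a ++ true :: r → φ a r ≤ ψ a r) : sp x φ ≤ sp x ψ := by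
  induction x generalizing φ ψ with
  | nil => simp [sp]
  | cons b x ih =>
    simp only [sp]
    have h1 := ih (fun a r => φ (b :: a) r) (fun a r => ψ (b :: a) r) (by
      intro a r hx; apply H; simp [hx])
    cases b with
    | false => simpa using h1
    | true =>
      have := H [] x (by simp)
      simp only [if_true]; linarith

lemma sp_congr (x : List Bool) (φ ψ : List Bool → List Bool → ℝ)
    (H : ∀ a r, x = a ++ true :: r → φ a r = ψ a r) : sp x φ = sp x ψ :=
  le_antisymm (sp_le _ _ _ fun a r e => (H a r e).le) (sp_le _ _ _ fun a r e => (H a r e).ge)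

lemma sp_zero (x : List Bool) : sp x (fun _ _ => 0) = 0 := by
  induction x with
  | nil => simp [sp]
  | cons b x ih => simp [sp, ih]

lemma sp_mul (x : List Bool) (φ : List Bool → List Bool → ℝ) (c : ℝ) :
    sp x (fun a r => c * φ a r) = c * sp x φ := by
  induction x generalizing φ with
  | nil => simp [sp]
  | cons b x ih => simp only [sp, ih]; split_ifs <;> ring

lemma sp_sum {ι : Type*} (s : Finset ι) (x : List Bool) (φ : ι → List Bool → List Bool → ℝ) :
    ∑ i ∈ s, sp x (φ i) = sp x (fun a r => ∑ i ∈ s, φ i a r) := by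
  induction x generalizing φ with
  | nil => simp [sp]
  | cons b x ih =>
    simp only [sp, Finset.sum_add_distrib, ih]
    cases b <;> simp

lemma sp_nonneg (x : List Bool) (φ : List Bool → List Bool → ℝ)
    (H : ∀ a r, x = a ++ true :: r → 0 ≤ φ a r) : 0 ≤ sp x φ := by
  rw [← sp_zero x]; exact sp_le _ _ _ H

lemma sp_reverse (x : List Bool) (φ : List Bool → List Bool → ℝ) :
    sp x.reverse φ = sp x (fun a r => φ r.reverse a.reverse) := by
  induction x generalizing φ with
  | nil => simp [sp]
  | cons b x ih => simp [sp, sp_append, ih, add_comm]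

@[simp] lemma fstT_nil (g : List Bool → ℝ) : fstT g [] = 0 := rfl
@[simp] lemma fstT_true (g : List Bool → ℝ) (l) : fstT g (true :: l) = 0 := rfl
@[simp] lemma fstT_false (g : List Bool → ℝ) (l) : fstT g (false :: l) = g l := rfl
@[simp] lemma lstT_nil (g : List Bool → ℝ) : lstT g [] = 0 := rfl
@[simp] lemma lstT_true (g : List Bool → ℝ) (l) : lstT g (l ++ [true]) = 0 := by simp [lstT]
@[simp] lemma lstT_false (g : List Bool → ℝ) (l) : lstT g (l ++ [false]) = g l := by simp [lstT]
@[simp] lemma lstT_cons_true (g : List Bool → ℝ) (b l) :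
    lstT g (b :: (l ++ [true])) = 0 := by simp [lstT]
@[simp] lemma lstT_cons_false (g : List Bool → ℝ) (b l) :
    lstT g (b :: (l ++ [false])) = g (b :: l) := by simp [lstT]

lemma fstT_congr (f g : List Bool → ℝ) (l : List Bool)
    (H : ∀ l', l'.length < l.length → f l' = g l') : fstT f l = fstT g l := by
  match l with
  | [] => rfl
  | true :: l => rfl
  | false :: l => simp [H l]

lemma lstT_congr (f g : List Bool → ℝ) (l : List Bool)
    (H : ∀ l', l'.length < l.length → f l' = g l') : lstT f l = lstT g l := by
  unfold lstT
  apply fstT_congr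
  intro l' hl; apply H; simpa using hl

lemma hN_eq (k : ℕ) : ∀ β : List Bool, β.length ≤ k → hN k β = h β := by
  induction k using Nat.strong_induction_on with
  | _ k ih =>
  intro β hβ
  unfold h
  rcases Nat.lt_or_ge β.length k with hlt | hge
  swap
  · rw [le_antisymm hβ hge]
  cases β with
  | nil => cases k <;> simp [hN]
  | cons b β =>
    obtain ⟨k, rfl⟩ : ∃ j, k = j + 1 := ⟨k - 1, by omega⟩
    simp only [List.length_cons] at hlt
    rw [List.length_cons, hN, hN]
    have key : ∀ l : List Bool, l.length < (b :: β).length → hN k l = hN β.length l := by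
      intro l hl
      simp only [List.length_cons] at hl
      rw [ih k (by omega) l (by omega), ih β.length (by omega) l (by omega)]
    rw [fstT_congr _ _ _ key, lstT_congr _ _ _ key, sp_congr _ _ _ (fun a r e => ?_)]
    have := congrArg List.length e
    simp only [List.length_append, List.length_cons] at this
    rw [key a (by simp; omega), key r (by simp; omega)]

@[simp] lemma h_nil : h [] = 0 := by simp [h, hN]
@[simp] lemma h_F : h [false] = 1 := by simp [h, hN]
@[simp] lemma h_Tsing : h [true] = 0 := by simp [h, hN]

lemma h_rec (β : List Bool) (hβ : 2 ≤ β.length) :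
    (β.length : ℝ) * h β = sp β (fun a r => h a * h r) + fstT h β + lstT h β := by
  obtain ⟨k, hk⟩ : ∃ k, β.length = k + 1 := ⟨β.length - 1, by omega⟩
  have h0 : (β.length : ℝ) ≠ 0 := by
    have : β.length ≠ 0 := by omega
    exact_mod_cast this
  have e : h β = (sp β (fun a r => hN k a * hN k r) + fstT (hN k) β + lstT (hN k) β) / β.length := by
    rw [h]
    conv_lhs => rw [hk]
    rw [hN, if_neg (by omega), if_neg (by omega)]
  have key : ∀ l : List Bool, l.length < β.length → hN k l = h l := by
    intro l hl; exact hN_eq k l (by omega)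
  rw [e, mul_div_cancel₀ _ h0]
  rw [fstT_congr _ _ _ key, lstT_congr _ _ _ key, sp_congr _ _ _ (fun a r e => ?_)]
  have := congrArg List.length e
  simp only [List.length_append, List.length_cons] at this
  rw [key a (by omega), key r (by omega)]

lemma h_nonneg (β : List Bool) : 0 ≤ h β := by
  suffices H : ∀ k β, 0 ≤ hN k β from H _ _
  intro k
  induction k with
  | zero => intro β; simp [hN]
  | succ k ih =>
    intro β
    rw [hN]
    split_ifs
    · rfl
    · norm_num
    · rfl
    · have f0 : ∀ g : List Bool → ℝ, (∀ l, 0 ≤ g l) → ∀ l, 0 ≤ fstT g l := by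
        intro g hg l
        match l with
        | [] => simp
        | true :: l => simp
        | false :: l => simp [hg]
      have := sp_nonneg β (fun a r => hN k a * hN k r) (fun a r _ => mul_nonneg (ih a) (ih r))
      have := f0 (hN k) ih β
      have : 0 ≤ lstT (hN k) β := f0 _ (fun l => ih _) _
      positivity

lemma h_reverse (β : List Bool) : h β.reverse = h β := by
  induction hn : β.length using Nat.strong_induction_on generalizing β with
  | _ n ih =>
  subst hn
  match β with
  | [] => simp
  | [b] => simp
  | b :: c :: l =>
    set β := b :: c :: l with hβ
    have h2 : 2 ≤ β.length := by simp [hβ]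
    have e1 := h_rec β h2
    have e2 := h_rec β.reverse (by simpa using h2)
    rw [List.length_reverse, sp_reverse] at e2
    have a1 : fstT h β.reverse = lstT h β := by
      unfold lstT
      apply fstT_congr
      intro l' hl; rw [ih l'.length (by simpa using hl) l' rfl]
    have a2 : lstT h β.reverse = fstT h β := by
      unfold lstT
      rw [List.reverse_reverse]
      apply fstT_congr
      intro l' hl; rw [ih l'.length (by simpa using hl) l' rfl]
    have a3 : sp β (fun a r => h r.reverse * h a.reverse) = sp β (fun a r => h a * h r) := by
      apply sp_congr
      intro a r e
      have := congrArg List.length e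
      simp only [List.length_append, List.length_cons] at this
      rw [ih a.length (by omega) a rfl, ih r.length (by omega) r rfl, mul_comm]
    rw [a1, a2, a3] at e2
    have h0 : (β.length : ℝ) ≠ 0 := by
      have : β.length ≠ 0 := by omega
      exact_mod_cast this
    apply mul_left_cancel₀ h0
    rw [e1, e2]; ring

lemma h_T (v : List Bool) : h (true :: v) = 0 := by
  induction hn : v.length using Nat.strong_induction_on generalizing v with
  | _ n ih =>
  subst hn
  rcases List.eq_nil_or_concat' v with rfl | ⟨v', b, rfl⟩
  · simp
  have e := h_rec (true :: (v' ++ [b])) (by simp)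
  have h0 : (((true :: (v' ++ [b])).length : ℕ) : ℝ) ≠ 0 := by
    rw [List.length_cons]; positivity
  have a1 : sp (true :: (v' ++ [b])) (fun a r => h a * h r) = 0 := by
    rw [sp, sp_congr _ _ (fun _ _ => 0), sp_zero]
    · simp
    · intro a r e
      have := congrArg List.length e
      simp only [List.length_append, List.length_cons] at this
      rw [ih a.length (by simp; simp at this; omega) a rfl, zero_mul]
  have a2 : lstT h (true :: (v' ++ [b])) = 0 := by
    cases b
    · simp [ih v'.length (by simp) v' rfl]
    · simp
  rw [a1, a2, fstT_true, add_zero, add_zero] at e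
  exact (mul_eq_zero.mp e).resolve_left h0

lemma h_T' (v : List Bool) : h (v ++ [true]) = 0 := by
  rw [← h_reverse]; simp [h_T]

lemma h_TT (x y : List Bool) : h (x ++ true :: true :: y) = 0 := by
  induction hn : x.length + y.length using Nat.strong_induction_on generalizing x y with
  | _ n ih =>
  subst hn
  rcases List.eq_nil_or_concat' y with rfl | ⟨y', b, rfl⟩
  · have := h_T' (x ++ [true]); simpa using this
  cases x with
  | nil => exact h_T _
  | cons b' x =>
  have e := h_rec (b' :: x ++ true :: true :: (y' ++ [b])) (by simp; omega)
  have h0 : (((b' :: x ++ true :: true :: (y' ++ [b])).length : ℕ) : ℝ) ≠ 0 := by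
    rw [List.cons_append, List.length_cons]; positivity
  have a1 : sp (b' :: x ++ true :: true :: (y' ++ [b])) (fun a r => h a * h r) = 0 := by
    rw [sp_append, sp_congr (b' :: x) _ (fun _ _ => 0), sp_zero, sp, sp, sp_congr (y' ++ [b]) _ (fun _ _ => 0), sp_zero]
    · have z := h_T' (b' :: x)
      simp only [List.cons_append] at z
      simp [h_T, z]
    · intro a r e
      have := congrArg List.length e
      simp only [List.length_append, List.length_cons] at this
      have e' := ih _ (by simp; simp at this; omega) (b' :: x) a rfl
      simp only [List.cons_append] at e' ⊢
      rw [e', zero_mul]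
    · intro a r e
      have := congrArg List.length e
      simp only [List.length_append, List.length_cons] at this
      rw [ih _ (by simp; omega) r (y' ++ [b]) rfl, mul_zero]
  have a2 : lstT h (b' :: x ++ true :: true :: (y' ++ [b])) = 0 := by
    have : b' :: x ++ true :: true :: (y' ++ [b]) = (b' :: x ++ true :: true :: y') ++ [b] := by simp
    rw [this]
    cases b
    · rw [lstT_false, ih _ (by simp) (b' :: x) y' rfl]
    · rw [lstT_true]
  have a3 : fstT h (b' :: x ++ true :: true :: (y' ++ [b])) = 0 := by
    cases b'
    · simp [ih _ (by simp) x (y' ++ [b]) rfl]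
    · simp
  rw [a1, a2, a3, add_zero, add_zero] at e
  exact (mul_eq_zero.mp e).resolve_left h0

lemma h_FF : h [false, false] = 1 := by
  have := h_rec [false, false] (by simp)
  simp [sp, lstT] at this; linarith

lemma h_FFF : h [false, false, false] = 2 / 3 := by
  have := h_rec [false, false, false] (by simp)
  simp [sp, lstT, h_FF] at this; linarith

lemma h_FFFF : h [false, false, false, false] = 1 / 3 := by
  have := h_rec [false, false, false, false] (by simp)
  simp [sp, lstT, h_FFF] at this; linarith

/-- A free letter may be prepended in front of an initial short block. -/
lemma h_F1 (v : List Bool) : h (false :: false :: true :: v) = h (false :: true :: v) := by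
  induction hn : v.length using Nat.strong_induction_on generalizing v with
  | _ n ih =>
  subst hn
  have e1 := h_rec (false :: false :: true :: v) (by simp)
  have e2 := h_rec (false :: true :: v) (by simp)
  simp only [sp, fstT_false, h_T, List.length_cons, h_F, h_FF] at e1 e2
  rw [sp_congr v _ (fun a r => h (false :: true :: a) * h r)] at e1
  swap
  · intro a r e
    have := congrArg List.length e
    simp only [List.length_append, List.length_cons] at this
    rw [ih _ (by omega) a rfl]
  have a : lstT h (false :: false :: true :: v) = lstT h (false :: true :: v) := by
    rcases List.eq_nil_or_concat' v with rfl | ⟨v', b, rfl⟩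
    · simp [lstT]
    · have t1 := lstT_false h (false :: true :: v')
      have t2 := lstT_false h (false :: false :: true :: v')
      have t3 := lstT_true h (false :: true :: v')
      have t4 := lstT_true h (false :: false :: true :: v')
      simp only [List.cons_append] at t1 t2 t3 t4
      cases b
      · rw [t1, t2, ih _ (by simp) v' rfl]
      · rw [t3, t4]
  rw [a] at e1
  push_cast at e1 e2
  simp at e1 e2
  have : ((v.length : ℝ) + 1 + 1 + 1) * (h (false :: false :: true :: v) - h (false :: true :: v)) = 0 := by
    linarith
  have hp : ((v.length : ℝ) + 1 + 1 + 1) ≠ 0 := by positivity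
  have := (mul_eq_zero.mp this).resolve_left hp
  linarith

lemma h_F1' (v : List Bool) : h (v ++ [true, false, false]) = h (v ++ [true, false]) := by
  rw [← h_reverse, ← h_reverse (v ++ [true, false])]
  simp [h_F1]

/-- A block of length two decouples. -/
lemma h_F2 (x y : List Bool) : h (x ++ true :: false :: false :: true :: y) =
    h (x ++ [true, false]) * h (false :: true :: y) := by
  induction hn : x.length + y.length using Nat.strong_induction_on generalizing x y with
  | _ n ih =>
  subst hn
  rcases List.eq_nil_or_concat' y with rfl | ⟨y', b, rfl⟩
  · have e1 := h_T' (x ++ [true, false, false])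
    have e2 := h_T' [false]
    simp at e1 e2
    simp [e1, e2]
  cases x with
  | nil => simp [h_T]
  | cons b' x =>
  set X := b' :: x with hX
  set Y := y' ++ [b] with hY
  have e := h_rec (X ++ true :: false :: false :: true :: Y) (by simp; omega)
  have e1 := h_rec (X ++ [true, false]) (by simp)
  have e2 := h_rec (false :: true :: Y) (by simp)
  rw [sp_append] at e e1
  simp only [sp] at e e1 e2
  rw [sp_congr X _ (fun a r => h (false :: true :: Y) * (h a * h (r ++ [true, false]))), sp_mul,
    sp_congr Y _ (fun a r => h (X ++ [true, false]) * (h (false :: true :: a) * h r)), sp_mul] at e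
  rotate_left
  · intro a r e
    have := congrArg List.length e
    simp only [List.length_append, List.length_cons] at this
    rw [ih _ (by omega) X a rfl]; ring
  · intro a r e
    have := congrArg List.length e
    simp only [List.length_append, List.length_cons] at this
    rw [ih _ (by omega) r Y rfl]; ring
  have a1 : fstT h (X ++ true :: false :: false :: true :: Y) =
      fstT h (X ++ [true, false]) * h (false :: true :: Y) := by
    rw [hX]
    cases b'
    · simp only [List.cons_append, fstT_false]
      rw [ih _ (by simp [hX]) x Y rfl]
    · simp
  have a2 : lstT h (X ++ true :: false :: false :: true :: Y) =
      h (X ++ [true, false]) * lstT h (false :: true :: Y) := by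
    have t1 : X ++ true :: false :: false :: true :: Y = (X ++ true :: false :: false :: true :: y') ++ [b] := by
      simp [hY]
    have t2 : false :: true :: Y = (false :: true :: y') ++ [b] := by simp [hY]
    rw [t1, t2]
    cases b
    · rw [lstT_false, lstT_false, ih _ (by simp [hY]) X y' rfl]
    · rw [lstT_true, lstT_true, mul_zero]
  have a3 : lstT h (X ++ [true, false]) = 0 := by
    have := lstT_false h (X ++ [true])
    rw [h_T'] at this
    simpa using this
  have a4 := h_F1 Y
  have a5 := h_F1' X
  have l1 : (X ++ true :: false :: false :: true :: Y).length = X.length + Y.length + 4 := by simp; ring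
  have l2 : (X ++ [true, false]).length = X.length + 2 := by simp
  have l3 : (false :: true :: Y).length = Y.length + 2 := by simp
  rw [a1, a2, l1] at e
  rw [a3, l2] at e1
  rw [l3] at e2
  push_cast at e e1 e2
  simp [h_T, a4, a5] at e e1 e2
  have hp : ((X.length : ℝ) + Y.length + 4) ≠ 0 := by positivity
  apply mul_left_cancel₀ hp
  rw [e]
  linear_combination (-h (false :: true :: Y)) * e1 - (h (X ++ [true, false])) * e2

lemma h_M0 (y : List Bool) : h (false :: false :: y) ≤ h (false :: y) := by
  induction hn : y.length using Nat.strong_induction_on generalizing y with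
  | _ n ih =>
  subst hn
  rcases List.eq_nil_or_concat' y with rfl | ⟨y', b, rfl⟩
  · simp [h_FF]
  set Y := y' ++ [b] with hY
  have hYl : 1 ≤ Y.length := by simp [hY]
  have e1 := h_rec (false :: false :: Y) (by simp)
  have e2 := h_rec (false :: Y) (by simp; omega)
  simp only [sp, fstT_false, List.length_cons] at e1 e2
  have a0 : sp Y (fun a r => h (false :: false :: a) * h r) ≤ sp Y (fun a r => h (false :: a) * h r) := by
    apply sp_le
    intro a r e
    have := congrArg List.length e
    simp only [List.length_append, List.length_cons] at this
    exact mul_le_mul_of_nonneg_right (ih _ (by omega) a rfl) (h_nonneg r)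
  have a1 : lstT h (false :: false :: Y) ≤ lstT h (false :: Y) := by
    have t1 : false :: false :: Y = (false :: false :: y') ++ [b] := by simp [hY]
    have t2 : false :: Y = (false :: y') ++ [b] := by simp [hY]
    rw [t1, t2]
    cases b
    · rw [lstT_false, lstT_false]; exact ih _ (by simp [hY]) y' rfl
    · simp only [lstT_true]; exact le_rfl
  have := h_nonneg Y
  push_cast at e1 e2
  simp at e1 e2
  have hp : (0 : ℝ) < (Y.length : ℝ) + 1 + 1 := by positivity
  refine le_of_mul_le_mul_left ?_ hp
  linarith

lemma h_L0 (y : List Bool) : h (false :: false :: false :: y) ≤ 2 / 3 * h (false :: false :: y) := by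
  induction hn : y.length using Nat.strong_induction_on generalizing y with
  | _ n ih =>
  subst hn
  rcases List.eq_nil_or_concat' y with rfl | ⟨y', b, rfl⟩
  · simp [h_FF, h_FFF]
  set Y := y' ++ [b] with hY
  have e1 := h_rec (false :: false :: false :: Y) (by simp)
  have e2 := h_rec (false :: false :: Y) (by simp)
  simp only [sp, fstT_false, List.length_cons] at e1 e2
  have a0 : sp Y (fun a r => h (false :: false :: false :: a) * h r) ≤
      2 / 3 * sp Y (fun a r => h (false :: false :: a) * h r) := by
    rw [← sp_mul]
    apply sp_le
    intro a r e
    have := congrArg List.length e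
    simp only [List.length_append, List.length_cons] at this
    have := mul_le_mul_of_nonneg_right (ih _ (by omega) a rfl) (h_nonneg r)
    linarith
  have a1 : lstT h (false :: false :: false :: Y) ≤ 2 / 3 * lstT h (false :: false :: Y) := by
    have t1 : false :: false :: false :: Y = (false :: false :: false :: y') ++ [b] := by simp [hY]
    have t2 : false :: false :: Y = (false :: false :: y') ++ [b] := by simp [hY]
    rw [t1, t2]
    cases b
    · rw [lstT_false, lstT_false]; exact ih _ (by simp [hY]) y' rfl
    · simp only [lstT_true]; simp
  have := h_M0 Y
  have := h_nonneg (false :: false :: Y)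
  push_cast at e1 e2
  simp at e1 e2
  have hp : (0 : ℝ) < (Y.length : ℝ) + 1 + 1 + 1 := by positivity
  refine le_of_mul_le_mul_left ?_ hp
  linarith

/-- Lengthening a block of length at least two costs a factor `2/3`. -/
lemma h_L (x y : List Bool) : h (x ++ false :: false :: false :: y) ≤
    2 / 3 * h (x ++ false :: false :: y) := by
  induction hn : x.length + y.length using Nat.strong_induction_on generalizing x y with
  | _ n ih =>
  subst hn
  rcases List.eq_nil_or_concat' y with rfl | ⟨y', b, rfl⟩
  · have := h_L0 x.reverse
    rw [← h_reverse, ← h_reverse (false :: false :: x.reverse)] at this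
    simpa using this
  cases x with
  | nil => exact h_L0 _
  | cons b' x =>
  set X := b' :: x with hX
  set Y := y' ++ [b] with hY
  have e1 := h_rec (X ++ false :: false :: false :: Y) (by simp; omega)
  have e2 := h_rec (X ++ false :: false :: Y) (by simp; omega)
  rw [sp_append] at e1 e2
  simp only [sp] at e1 e2
  have a0 : sp Y (fun a r => h (X ++ false :: false :: false :: a) * h r) ≤
      2 / 3 * sp Y (fun a r => h (X ++ false :: false :: a) * h r) := by
    rw [← sp_mul]
    apply sp_le
    intro a r e
    have := congrArg List.length e
    simp only [List.length_append, List.length_cons] at this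
    have := mul_le_mul_of_nonneg_right (ih _ (by omega) X a rfl) (h_nonneg r)
    linarith
  have a0' : sp X (fun a r => h a * h (r ++ false :: false :: false :: Y)) ≤
      2 / 3 * sp X (fun a r => h a * h (r ++ false :: false :: Y)) := by
    rw [← sp_mul]
    apply sp_le
    intro a r e
    have := congrArg List.length e
    simp only [List.length_append, List.length_cons] at this
    have := mul_le_mul_of_nonneg_right (ih _ (by omega) r Y rfl) (h_nonneg a)
    linarith
  have a1 : lstT h (X ++ false :: false :: false :: Y) ≤ 2 / 3 * lstT h (X ++ false :: false :: Y) := by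
    have t1 : X ++ false :: false :: false :: Y = (X ++ false :: false :: false :: y') ++ [b] := by simp [hY]
    have t2 : X ++ false :: false :: Y = (X ++ false :: false :: y') ++ [b] := by simp [hY]
    rw [t1, t2]
    cases b
    · rw [lstT_false, lstT_false]; exact ih _ (by simp [hY]) X y' rfl
    · simp only [lstT_true]; simp
  have a2 : fstT h (X ++ false :: false :: false :: Y) ≤ 2 / 3 * fstT h (X ++ false :: false :: Y) := by
    rw [hX]
    cases b'
    · simp only [List.cons_append, fstT_false]
      exact ih _ (by simp [hX]) x Y rfl
    · simp
  have := h_nonneg (X ++ false :: false :: Y)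
  have l1 : (X ++ false :: false :: false :: Y).length = X.length + Y.length + 3 := by simp; ring
  have l2 : (X ++ false :: false :: Y).length = X.length + Y.length + 2 := by simp; ring
  rw [l1] at e1
  rw [l2] at e2
  push_cast at e1 e2
  simp at e1 e2
  have hp : (0 : ℝ) < (X.length : ℝ) + Y.length + 3 := by positivity
  refine le_of_mul_le_mul_left ?_ hp
  linarith

/-- `(FFT)^k`. -/
def pre : ℕ → List Bool
  | 0 => []
  | k + 1 => false :: false :: true :: pre k

/-- `F(TF)^k`. -/
def alt : ℕ → List Bool
  | 0 => [false]
  | k + 1 => false :: true :: alt k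

lemma pre_add (a b : ℕ) : pre (a + b) = pre a ++ pre b := by
  induction a with
  | zero => simp [pre]
  | succ a ih => rw [Nat.add_right_comm, pre, ih]; simp [pre]

lemma alt_succ' (k : ℕ) : alt (k + 1) = alt k ++ [true, false] := by
  induction k with
  | zero => simp [alt]
  | succ k ih =>
    change false :: true :: alt (k + 1) = (false :: true :: alt k) ++ [true, false]
    rw [ih]; simp

lemma alt_length (k : ℕ) : (alt k).length = 2 * k + 1 := by
  induction k with
  | zero => simp [alt]
  | succ k ih => simp [alt, ih]; ring

lemma sp_alt (k : ℕ) (φ : List Bool → List Bool → ℝ) :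
    sp (alt k) φ = ∑ i ∈ Finset.range k, φ (alt i) (alt (k - 1 - i)) := by
  induction k generalizing φ with
  | zero => simp [alt, sp]
  | succ k ih =>
    rw [Finset.sum_range_succ']
    simp only [alt, sp, ih, Bool.false_eq_true, if_false, if_true]
    rw [zero_add, add_comm]
    congr 1
    apply Finset.sum_congr rfl
    intro i hi
    congr 2
    omega

lemma h_alt_rec (k : ℕ) : (2 * k + 3 : ℝ) * h (alt (k + 1)) =
    ∑ i ∈ Finset.range (k + 1), h (alt i) * h (alt (k - i)) := by
  have e := h_rec (alt (k + 1)) (by rw [alt_length]; omega)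
  rw [sp_alt, alt_length] at e
  have a1 : fstT h (alt (k + 1)) = 0 := by simp [alt, h_T]
  have a2 : lstT h (alt (k + 1)) = 0 := by
    have : alt (k + 1) = (alt k ++ [true]) ++ [false] := by simp [alt_succ']
    rw [this, lstT_false, h_T']
  rw [a1, a2] at e
  simp only [Nat.add_sub_cancel, add_zero] at e
  rw [← e]; push_cast; ring

lemma h_alt0 : h (alt 0) = 1 := by simp [alt]
lemma h_alt1 : h (alt 1) = 1 / 3 := by
  have := h_alt_rec 0
  simp [h_alt0] at this; linarith
lemma h_alt2 : h (alt 2) = 2 / 15 := by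
  have := h_alt_rec 1
  simp [Finset.sum_range_succ, h_alt0, h_alt1] at this; linarith

lemma h_alt_bound (k : ℕ) : h (alt (k + 2)) ≤ 2 / 15 * (12 / 25 : ℝ) ^ k := by
  induction k using Nat.strong_induction_on with
  | _ k ih =>
  cases k with
  | zero => simp [h_alt2]
  | succ m =>
  have low : ∀ j, j < m + 2 → h (alt (j + 1)) ≤ 7 / 10 * (12 / 25 : ℝ) ^ (j + 1) := by
    intro j hj
    cases j with
    | zero => rw [h_alt1]; norm_num
    | succ j =>
      refine (ih j (by omega)).trans ?_
      have : (0 : ℝ) < (12 / 25 : ℝ) ^ j := by positivity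
      rw [pow_succ, pow_succ]; nlinarith
  have e := h_alt_rec (m + 2)
  rw [Finset.sum_range_succ, Finset.sum_range_succ'] at e
  have i1 := ih m (by omega)
  have s1 : ∑ i ∈ Finset.range (m + 1), h (alt (i + 1)) * h (alt (m + 2 - (i + 1))) ≤
      ∑ i ∈ Finset.range (m + 1), 49 / 100 * (12 / 25 : ℝ) ^ (m + 2) := by
    apply Finset.sum_le_sum
    intro i hi
    rw [Finset.mem_range] at hi
    have l1 := low i (by omega)
    have l2 := low (m - i) (by omega)
    have e1 : m + 2 - (i + 1) = m - i + 1 := by omega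
    rw [e1]
    calc _ ≤ (7 / 10 * (12 / 25 : ℝ) ^ (i + 1)) * (7 / 10 * (12 / 25 : ℝ) ^ (m - i + 1)) :=
          mul_le_mul l1 l2 (h_nonneg _) (by positivity)
      _ = 49 / 100 * (12 / 25 : ℝ) ^ ((i + 1) + (m - i + 1)) := by rw [pow_add]; ring
      _ = _ := by congr 2; omega
  rw [Finset.sum_const, Finset.card_range, nsmul_eq_mul] at s1
  simp only [Nat.sub_zero, Nat.sub_self, h_alt0] at e
  have hp : (0 : ℝ) < (12 / 25 : ℝ) ^ m := by positivity
  have e3 : (12 / 25 : ℝ) ^ (m + 2) = (144 / 625) * (12 / 25 : ℝ) ^ m := by ring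
  have e4 : (12 / 25 : ℝ) ^ (m + 1) = (12 / 25) * (12 / 25 : ℝ) ^ m := by ring
  rw [e3] at s1
  rw [e4]
  push_cast at e s1
  have hm : (0 : ℝ) ≤ m := by positivity
  have hpos : (0 : ℝ) < 2 * (m + 2) + 3 := by positivity
  refine le_of_mul_le_mul_left ?_ hpos
  have hmp : 0 ≤ (m : ℝ) * (12 / 25 : ℝ) ^ m := by positivity
  nlinarith

/-- Cube root of three. -/
noncomputable def t : ℝ := (3 : ℝ) ^ (1 / 3 : ℝ)

lemma t_cube : t ^ 3 = 3 := by
  rw [t, ← Real.rpow_natCast, ← Real.rpow_mul (by norm_num)]; norm_num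

lemma t_pos : 0 < t := by unfold t; positivity

lemma t_lo : 1.44 < t := by
  by_contra hc
  push Not at hc
  have : t ^ 3 ≤ 1.44 ^ 3 := pow_le_pow_left₀ t_pos.le hc 3
  rw [t_cube] at this; norm_num at this

lemma t_hi : t < 1.4423 := by
  by_contra hc
  push Not at hc
  have : (1.4423 : ℝ) ^ 3 ≤ t ^ 3 := pow_le_pow_left₀ (by norm_num) hc 3
  rw [t_cube] at this; norm_num at this

/-- Normalized weight. -/
noncomputable def X (β : List Bool) : ℝ := h β * t ^ β.length

lemma X_nonneg (β : List Bool) : 0 ≤ X β := mul_nonneg (h_nonneg _) (pow_nonneg t_pos.le _)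

lemma alt_top (k : ℕ) : h (alt (k + 2)) * t ^ (2 * (k + 2) + 3) < 9 / 5 := by
  have b := h_alt_bound k
  have tp := t_pos
  have th := t_hi
  have tc := t_cube
  have e : t ^ (2 * (k + 2) + 3) = (9 * t) * (t ^ 2) ^ k := by
    calc _ = (t ^ 3) ^ 2 * t * (t ^ 2) ^ k := by rw [← pow_mul, ← pow_mul]; ring
      _ = _ := by rw [tc]; ring
  rw [e]
  have q : (12 / 25 : ℝ) * t ^ 2 ≤ 1 := by nlinarith
  have q' : ((12 / 25 : ℝ) * t ^ 2) ^ k ≤ 1 := pow_le_one₀ (by positivity) q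
  calc _ ≤ 2 / 15 * (12 / 25 : ℝ) ^ k * (9 * t * (t ^ 2) ^ k) :=
        mul_le_mul_of_nonneg_right b (by positivity)
    _ = (6 / 5 * t) * ((12 / 25 : ℝ) * t ^ 2) ^ k := by rw [mul_pow]; ring
    _ ≤ (6 / 5 * t) * 1 := mul_le_mul_of_nonneg_left q' (by positivity)
    _ < 9 / 5 := by linarith

lemma h_alt_l (k : ℕ) : h (false :: alt (k + 1)) = h (alt (k + 1)) := by
  simp only [alt]; exact h_F1 _

lemma h_alt_r (k : ℕ) : h (alt (k + 1) ++ [false]) = h (alt (k + 1)) := by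
  rw [alt_succ']
  have := h_F1' (alt k)
  simpa using this

lemma h_alt_lr (k : ℕ) : h (false :: alt (k + 1) ++ [false]) = h (alt (k + 1)) := by
  rw [alt_succ']
  have := h_F1' (false :: alt k)
  simp only [List.cons_append, List.append_assoc, List.nil_append] at this ⊢
  rw [this, ← alt_succ', h_alt_l]

/-- Patterns handled by reduction. -/
def Bad (β : List Bool) : Prop :=
  (∃ x y, β = x ++ false :: false :: false :: y) ∨
  (∃ x y, β = x ++ true :: false :: false :: true :: y) ∨
  (∃ x y, β = x ++ true :: true :: y) ∨ (∃ x, β = x ++ [true])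

lemma Bad.cons {β : List Bool} (b : Bool) (H : Bad β) : Bad (b :: β) := by
  rcases H with ⟨x, y, rfl⟩ | ⟨x, y, rfl⟩ | ⟨x, y, rfl⟩ | ⟨x, rfl⟩
  · exact Or.inl ⟨b :: x, y, by simp⟩
  · exact Or.inr (Or.inl ⟨b :: x, y, by simp⟩)
  · exact Or.inr (Or.inr (Or.inl ⟨b :: x, y, by simp⟩))
  · exact Or.inr (Or.inr (Or.inr ⟨b :: x, by simp⟩))

lemma classify : ∀ γ : List Bool, Bad (true :: γ) ∨ ∃ k, γ = alt k ∨ γ = alt k ++ [false]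
  | [] => Or.inl (Or.inr (Or.inr (Or.inr ⟨[], rfl⟩)))
  | true :: γ => Or.inl (Or.inr (Or.inr (Or.inl ⟨[], γ, rfl⟩)))
  | [false] => Or.inr ⟨0, Or.inl rfl⟩
  | [false, false] => Or.inr ⟨0, Or.inr rfl⟩
  | false :: false :: true :: γ => Or.inl (Or.inr (Or.inl ⟨[], γ, rfl⟩))
  | false :: false :: false :: γ => Or.inl (Or.inl ⟨[true], γ, rfl⟩)
  | false :: true :: γ => by
    rcases classify γ with H | ⟨k, rfl | rfl⟩
    · exact Or.inl ((H.cons false).cons true)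
    · exact Or.inr ⟨k + 1, Or.inl rfl⟩
    · exact Or.inr ⟨k + 1, Or.inr rfl⟩

lemma insert_pre : ∀ (k : ℕ) (x y : List Bool), x ++ false :: false :: y = pre k ++ [false, false] →
    ∃ i j, i + j = k ∧ x ++ false :: false :: false :: y = pre i ++ false :: (pre j ++ [false, false])
  | k, [], y, e => ⟨0, k, by omega, by simp only [List.nil_append] at e; simp [pre, e]⟩
  | 0, b :: x, y, e => by
    have := congrArg List.length e
    simp [pre] at this; omega
  | k + 1, [b], y, e => by simp [pre] at e
  | k + 1, [b, c], y, e => by simp [pre] at e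
  | k + 1, b :: c :: d :: x, y, e => by
    simp [pre] at e
    obtain ⟨rfl, rfl, rfl, e⟩ := e
    obtain ⟨i, j, hij, e'⟩ := insert_pre k x y (by simpa using e)
    exact ⟨i + 1, j, by omega, by simp [pre, e']⟩

/-- The main trichotomy for a word. -/
def Good (β : List Bool) : Prop :=
  (∃ k, β = pre k ++ [false, false] ∧ X β = t ^ 2) ∨ β = [false, false, false] ∨
  (∃ k, 1 ≤ k ∧ (β = false :: (pre k ++ [false, false]) ∨ β = pre k ++ [false, false, false]) ∧
    X β = 9 / 5) ∨ X β < 9 / 5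

lemma X_split (u v : List Bool) : X (u ++ true :: false :: false :: true :: v) * t ^ 2 =
    X (u ++ [true, false, false]) * X (false :: false :: true :: v) := by
  unfold X
  rw [h_F2, h_F1, h_F1']
  simp only [List.length_append, List.length_cons, List.length_nil]
  ring

lemma good_alt (k : ℕ) : Good (alt (k + 1)) ∧ Good (alt (k + 1) ++ [false]) ∧
    Good (false :: alt (k + 1)) ∧ Good (false :: alt (k + 1) ++ [false]) := by
  have tp := t_pos
  have tl := t_lo
  have th := t_hi
  have t1 : 1 ≤ t := by linarith
  have tc := t_cube
  cases k with
  | zero =>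
    refine ⟨?_, ?_, ?_, ?_⟩
    · refine Or.inr (Or.inr (Or.inr ?_))
      rw [X, h_alt1, alt_length]; norm_num [tc]
    · refine Or.inr (Or.inr (Or.inr ?_))
      rw [X, h_alt_r, h_alt1, List.length_append, alt_length]
      norm_num
      nlinarith
    · refine Or.inr (Or.inr (Or.inr ?_))
      rw [X, h_alt_l, h_alt1, List.length_cons, alt_length]
      norm_num
      nlinarith
    · refine Or.inl ⟨1, by simp [pre, alt], ?_⟩
      rw [X, h_alt_lr, h_alt1, List.length_append, List.length_cons, alt_length]
      norm_num
      nlinarith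
  | succ k =>
    have H := alt_top k
    have mono : ∀ m ≤ 2 * (k + 2) + 3, h (alt (k + 2)) * t ^ m < 9 / 5 := by
      intro m hm
      refine lt_of_le_of_lt ?_ H
      exact mul_le_mul_of_nonneg_left (pow_le_pow_right₀ t1 hm) (h_nonneg _)
    refine ⟨?_, ?_, ?_, ?_⟩ <;> refine Or.inr (Or.inr (Or.inr ?_))
    · rw [X]; apply mono; rw [alt_length]; omega
    · rw [X, h_alt_r]; apply mono; simp [alt_length]
    · rw [X, h_alt_l]; apply mono; simp [alt_length]
    · rw [X, h_alt_lr]; apply mono; simp [alt_length]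

lemma h_FFFTF : h [false, false, false, true, false] = 1 / 5 := by
  have := h_rec [false, false, false, true, false] (by simp)
  have a := h_F1 [false]
  have b := h_alt1
  have c := h_T' [false, false, false]
  simp [alt] at b c
  simp [sp, lstT, h_FFF, a, b, c] at this
  linarith

lemma h_FFFTFF : h [false, false, false, true, false, false] = 1 / 5 := by
  rw [← h_FFFTF]; exact h_F1' [false, false, false]

lemma h_FFTFFF : h [false, false, true, false, false, false] = 1 / 5 := by
  rw [← h_reverse]; exact h_FFFTFF

lemma h_mid : h [false, false, true, false, false, false, true, false, false] = 2 / 35 := by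
  have e1 := h_F1' [false, false, true, false, false, false]
  have e2 := h_F1 [false, false, false, true, false]
  simp only [List.cons_append, List.nil_append] at e1
  rw [e1, e2]
  have := h_rec [false, true, false, false, false, true, false] (by simp)
  have c := h_T' [false, true, false, false, false]
  have d : h [false, true, false, false, false] = 1 / 5 := by rw [← h_reverse]; exact h_FFFTF
  simp at c
  simp [sp, lstT, h_FFFTF, c, d, h_T] at this
  linarith

lemma pre_tfft (i : ℕ) (l : List Bool) : ∃ x y, pre (i + 2) ++ l = x ++ true :: false :: false :: true :: y :=
  ⟨[false, false], pre i ++ l, by simp [pre]⟩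

theorem good (β : List Bool) : Good β := by
  induction hn : β.length using Nat.strong_induction_on generalizing β with
  | _ n ih =>
  subst hn
  have tp := t_pos
  have tl := t_lo
  have th := t_hi
  have tc := t_cube
  have t2 : 0 < t ^ 2 := by positivity
  have t2l : 2.07 < t ^ 2 := by nlinarith
  by_cases hB : ∃ u v, β = u ++ true :: false :: false :: true :: v
  · obtain ⟨u, v, rfl⟩ := hB
    have sx := X_split u v
    have g1 := ih _ (by simp) (u ++ [true, false, false]) rfl
    have g2 := ih _ (by simp; omega) (false :: false :: true :: v) rfl
    have n1 := X_nonneg (u ++ [true, false, false])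
    have n2 := X_nonneg (false :: false :: true :: v)
    set β := u ++ true :: false :: false :: true :: v with hβ
    have dec1 : β = (u ++ [true]) ++ (false :: false :: true :: v) := by simp [hβ]
    have f1 : ∀ w, u ++ [true, false, false] = w ++ [false, false] → u ++ [true] = w := by
      intro w hw
      have : (u ++ [true]) ++ [false, false] = w ++ [false, false] := by simpa using hw
      exact List.append_cancel_right this
    -- left alternatives
    have c1 : (∃ k, u ++ [true] = pre k ∧ X (u ++ [true, false, false]) = t ^ 2) ∨
        (∃ k, 1 ≤ k ∧ u ++ [true] = false :: pre k ∧ X (u ++ [true, false, false]) = 9 / 5) ∨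
        X (u ++ [true, false, false]) < 9 / 5 := by
      rcases g1 with ⟨k, e, hX⟩ | e | ⟨k, hk, e | e, hX⟩ | hX
      · exact Or.inl ⟨k, f1 _ e, hX⟩
      · have := f1 [false] e
        cases u <;> simp at this
      · exact Or.inr (Or.inl ⟨k, hk, f1 (false :: pre k) e, hX⟩)
      · have := f1 (pre k ++ [false]) (by rw [e]; simp)
        have := congrArg List.getLast? this
        simp at this
      · exact Or.inr (Or.inr hX)
    have c2 : (∃ k, false :: false :: true :: v = pre k ++ [false, false] ∧
          X (false :: false :: true :: v) = t ^ 2) ∨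
        (∃ k, 1 ≤ k ∧ false :: false :: true :: v = pre k ++ [false, false, false] ∧
          X (false :: false :: true :: v) = 9 / 5) ∨
        X (false :: false :: true :: v) < 9 / 5 := by
      rcases g2 with ⟨k, e, hX⟩ | e | ⟨k, hk, e | e, hX⟩ | hX
      · exact Or.inl ⟨k, e, hX⟩
      · simp at e
      · obtain ⟨k, rfl⟩ : ∃ j, k = j + 1 := ⟨k - 1, by omega⟩
        simp [pre] at e
      · exact Or.inr (Or.inl ⟨k, hk, e, hX⟩)
      · exact Or.inr (Or.inr hX)
    have cancel : ∀ c, X β * t ^ 2 = c * t ^ 2 → X β = c := fun c hc =>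
      mul_right_cancel₀ t2.ne' hc
    have cancel' : X β * t ^ 2 < 9 / 5 * t ^ 2 → X β < 9 / 5 := fun hc =>
      lt_of_mul_lt_mul_right hc t2.le
    rcases c1 with ⟨a, ea, ha⟩ | ⟨a, ha1, ea, ha⟩ | ha
    · rcases c2 with ⟨b, eb, hb⟩ | ⟨b, hb1, eb, hb⟩ | hb
      · refine Or.inl ⟨a + b, ?_, ?_⟩
        · rw [dec1, ea, eb, pre_add]; simp
        · apply cancel; rw [sx, ha, hb]
      · refine Or.inr (Or.inr (Or.inl ⟨a + b, by omega, Or.inr ?_, ?_⟩))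
        · rw [dec1, ea, eb, pre_add]; simp
        · apply cancel; rw [sx, ha, hb]; ring
      · refine Or.inr (Or.inr (Or.inr (cancel' ?_)))
        rw [sx, ha]; nlinarith
    · rcases c2 with ⟨b, eb, hb⟩ | ⟨b, hb1, eb, hb⟩ | hb
      · refine Or.inr (Or.inr (Or.inl ⟨a + b, by omega, Or.inl ?_, ?_⟩))
        · rw [dec1, ea, eb, pre_add]; simp
        · apply cancel; rw [sx, ha, hb]
      · refine Or.inr (Or.inr (Or.inr (cancel' ?_)))
        rw [sx, ha, hb]; nlinarith
      · refine Or.inr (Or.inr (Or.inr (cancel' ?_)))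
        rw [sx, ha]; nlinarith
    · rcases c2 with ⟨b, eb, hb⟩ | ⟨b, hb1, eb, hb⟩ | hb
      · refine Or.inr (Or.inr (Or.inr (cancel' ?_)))
        rw [sx, hb]; nlinarith
      · refine Or.inr (Or.inr (Or.inr (cancel' ?_)))
        rw [sx, hb]; nlinarith
      · refine Or.inr (Or.inr (Or.inr (cancel' ?_)))
        rw [sx]; nlinarith
  by_cases hA : ∃ x y, β = x ++ false :: false :: false :: y
  · obtain ⟨x, y, rfl⟩ := hA
    have hL : X (x ++ false :: false :: false :: y) ≤ 2 / 3 * t * X (x ++ false :: false :: y) := by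
      unfold X
      have := h_L x y
      have p : 0 ≤ t ^ (x ++ false :: false :: false :: y).length := by positivity
      have := mul_le_mul_of_nonneg_right this p
      refine this.trans (le_of_eq ?_)
      simp only [List.length_append, List.length_cons]
      ring
    have small : X (x ++ false :: false :: y) ≤ 9 / 5 → X (x ++ false :: false :: false :: y) < 9 / 5 := by
      intro hx
      have := X_nonneg (x ++ false :: false :: y)
      nlinarith
    rcases ih _ (by simp) (x ++ false :: false :: y) rfl with ⟨k, e, hX⟩ | e | ⟨k, hk, e, hX⟩ | hX
    · obtain ⟨i, j, hij, e'⟩ := insert_pre k x y e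
      rw [e'] at hB ⊢
      rcases i with _ | _ | i
      · rcases j with _ | _ | j
        · exact Or.inr (Or.inl rfl)
        · refine Or.inr (Or.inr (Or.inl ⟨1, le_rfl, Or.inl rfl, ?_⟩))
          simp [X, pre, h_FFFTFF]
          calc (5 : ℝ)⁻¹ * t ^ 6 = 5⁻¹ * (t ^ 3) ^ 2 := by ring
            _ = _ := by rw [tc]; norm_num
        · exact absurd ⟨[false, false, false], pre j ++ [false, false], by simp [pre]⟩ hB
      · rcases j with _ | _ | j
        · refine Or.inr (Or.inr (Or.inl ⟨1, le_rfl, Or.inr rfl, ?_⟩))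
          simp [X, pre, h_FFTFFF]
          calc (5 : ℝ)⁻¹ * t ^ 6 = 5⁻¹ * (t ^ 3) ^ 2 := by ring
            _ = _ := by rw [tc]; norm_num
        · refine Or.inr (Or.inr (Or.inr ?_))
          simp [X, pre, h_mid]
          calc (2 / 35 : ℝ) * t ^ 9 = 2 / 35 * (t ^ 3) ^ 3 := by ring
            _ < _ := by rw [tc]; norm_num
        · exact absurd ⟨[false, false, true, false, false, false], pre j ++ [false, false], by simp [pre]⟩ hB
      · exact absurd (pre_tfft i _) hB
    · have e' : x ++ false :: false :: false :: y = [false, false, false, false] := by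
        match x, y, e with
        | [], y, e => simp at e; simp [e]
        | [b], y, e => simp at e; simp [e]
        | b :: c :: x, y, e =>
          have := congrArg List.length e
          simp at this
          omega
      refine Or.inr (Or.inr (Or.inr ?_))
      rw [e', X, h_FFFF]
      simp
      nlinarith
    · exact Or.inr (Or.inr (Or.inr (small hX.le)))
    · exact Or.inr (Or.inr (Or.inr (small hX.le)))
  have zero : h β = 0 → Good β := fun hz => Or.inr (Or.inr (Or.inr (by rw [X, hz]; norm_num)))
  have bad : Bad β → Good β := by
    intro hb
    rcases hb with hb | hb | ⟨x, y, rfl⟩ | ⟨x, rfl⟩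
    · exact absurd hb hA
    · exact absurd hb hB
    · exact zero (h_TT x y)
    · exact zero (h_T' x)
  match β with
  | [] => exact zero h_nil
  | true :: γ => exact zero (h_T γ)
  | [false] =>
    refine Or.inr (Or.inr (Or.inr ?_))
    simp [X]; linarith
  | [false, false] =>
    refine Or.inl ⟨0, rfl, ?_⟩
    simp [X, h_FF]
  | false :: true :: γ =>
    rcases classify γ with H | ⟨k, rfl | rfl⟩
    · exact bad (H.cons false)
    · exact (good_alt k).1
    · exact (good_alt k).2.1
  | false :: false :: true :: γ =>
    rcases classify γ with H | ⟨k, rfl | rfl⟩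
    · exact bad ((H.cons false).cons false)
    · exact (good_alt k).2.2.1
    · exact (good_alt k).2.2.2
  | false :: false :: false :: γ => exact absurd ⟨[], γ, rfl⟩ hA


lemma X_FFTFF : X (pre 1 ++ [false, false]) = t ^ 2 := by
  have tc := t_cube
  have e := h_alt_lr 0
  rw [h_alt1] at e
  simp [alt] at e
  simp [X, pre, e]
  nlinarith

lemma X_pre (k : ℕ) : X (pre (k + 1) ++ [false, false]) = t ^ 2 := by
  induction k with
  | zero => exact X_FFTFF
  | succ k ih =>
    have sx := X_split [false, false] (pre k ++ [false, false])
    have e1 := X_FFTFF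
    simp only [pre, List.cons_append, List.nil_append] at sx e1 ih ⊢
    rw [e1, ih] at sx
    exact mul_right_cancel₀ (pow_pos t_pos 2).ne' sx

lemma X_ext1 : X [false, false, false, true, false, false] = 9 / 5 := by
  simp [X, h_FFFTFF]
  calc (5 : ℝ)⁻¹ * t ^ 6 = 5⁻¹ * (t ^ 3) ^ 2 := by ring
    _ = _ := by rw [t_cube]; norm_num

lemma X_ext1' : X [false, false, true, false, false, false] = 9 / 5 := by
  simp [X, h_FFTFFF]
  calc (5 : ℝ)⁻¹ * t ^ 6 = 5⁻¹ * (t ^ 3) ^ 2 := by ring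
    _ = _ := by rw [t_cube]; norm_num

lemma X_ext (k : ℕ) : X (false :: (pre (k + 1) ++ [false, false])) = 9 / 5 := by
  cases k with
  | zero => exact X_ext1
  | succ k =>
    have sx := X_split [false, false, false] (pre k ++ [false, false])
    have e1 := X_ext1
    have e2 := X_pre k
    simp only [pre, List.cons_append, List.nil_append] at sx e1 e2 ⊢
    rw [e1, e2] at sx
    exact mul_right_cancel₀ (pow_pos t_pos 2).ne' sx

lemma X_ext' (k : ℕ) : X (pre (k + 1) ++ [false, false, false]) = 9 / 5 := by
  induction k with
  | zero => exact X_ext1'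
  | succ k ih =>
    have sx := X_split [false, false] (pre k ++ [false, false, false])
    have e1 := X_FFTFF
    simp only [pre, List.cons_append, List.nil_append] at sx e1 ih ⊢
    rw [e1, ih, mul_comm] at sx
    exact mul_left_cancel₀ (pow_pos t_pos 2).ne' sx

/-- Peak indicator of the letters of `l`, the letter before `l` being `a`. -/
def pkA : ℕ → List ℕ → List Bool
  | _, [] => []
  | _, [_] => [false]
  | a, b :: c :: l => decide (a < b ∧ c < b) :: pkA b (c :: l)

/-- Peak indicator of a list. -/
def pk : List ℕ → List Bool
  | [] => []
  | a :: l => false :: pkA a l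

lemma pkA_length : ∀ (a : ℕ) (l : List ℕ), (pkA a l).length = l.length
  | _, [] => rfl
  | _, [_] => rfl
  | _, b :: c :: l => by simp [pkA, pkA_length b (c :: l)]

lemma pk_length (l : List ℕ) : (pk l).length = l.length := by
  cases l <;> simp [pk, pkA_length]

lemma pkA_max (m : ℕ) (R : List ℕ) (hR : ∀ r ∈ R, r < m) : pkA m R = pk R := by
  match R with
  | [] => rfl
  | [r] => rfl
  | r :: c :: l =>
    have := hR r (by simp)
    simp [pkA, pk, this.le]

lemma pkA_last (m : ℕ) : ∀ (a : ℕ) (L : List ℕ), (∀ r ∈ L, r < m) →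
    pkA a (L ++ [m]) = pkA a L ++ [false]
  | _, [], _ => rfl
  | a, [b], hL => by
    have := hL b (by simp)
    simp [pkA, this.le]
  | a, b :: c :: l, hL => by
    have := pkA_last m b (c :: l) (fun r hr => hL r (by simp at hr ⊢; tauto))
    simp only [List.cons_append] at this
    simp [pkA, this]

lemma pkA_mid (m r : ℕ) (R : List ℕ) (hR : ∀ x ∈ r :: R, x < m) : ∀ (a : ℕ) (L : List ℕ), a < m →
    (∀ x ∈ L, x < m) → pkA a (L ++ m :: r :: R) = pkA a L ++ true :: pk (r :: R)
  | a, [], ha, _ => by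
    have := hR r (by simp)
    simp [pkA, ha, this, pkA_max m (r :: R) hR]
  | a, [b], ha, hL => by
    have := hR r (by simp)
    have hb := hL b (by simp)
    simp [pkA, hb, hb.le, this, pkA_max m (r :: R) hR]
  | a, b :: c :: l, ha, hL => by
    have := pkA_mid m r R hR b (c :: l) (hL b (by simp)) (fun r hr => hL r (by simp at hr ⊢; tauto))
    simp only [List.cons_append] at this
    simp [pkA, this]

lemma pk_first (m : ℕ) (R : List ℕ) (hR : ∀ x ∈ R, x < m) : pk (m :: R) = false :: pk R := by
  rw [pk, pkA_max m R hR]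

lemma pk_last (m : ℕ) (L : List ℕ) (hL : ∀ x ∈ L, x < m) : pk (L ++ [m]) = pk L ++ [false] := by
  cases L with
  | nil => rfl
  | cons a L =>
    simp [pk, pkA_last m a L (fun r hr => hL r (by simp [hr]))]

lemma pk_mid (m : ℕ) (L R : List ℕ) (hL : ∀ x ∈ L, x < m) (hR : ∀ x ∈ R, x < m)
    (L0 : L ≠ []) (R0 : R ≠ []) : pk (L ++ m :: R) = pk L ++ true :: pk R := by
  cases L with
  | nil => exact absurd rfl L0
  | cons a L =>
    cases R with
    | nil => exact absurd rfl R0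
    | cons r R =>
      simp [pk, pkA_mid m r R hR a L (hL a (by simp)) (fun r hr => hL r (by simp [hr]))]

/-- Arrangements of a finite set. -/
noncomputable def LS (A : Finset ℕ) : Finset (List ℕ) := A.toList.permutations.toFinset

lemma mem_LS {A : Finset ℕ} {l : List ℕ} : l ∈ LS A ↔ l.Nodup ∧ l.toFinset = A := by
  unfold LS
  rw [List.mem_toFinset, List.mem_permutations]
  constructor
  · intro hp
    refine ⟨hp.nodup_iff.mpr A.nodup_toList, ?_⟩
    ext x; simp [hp.mem_iff]
  · rintro ⟨hn, rfl⟩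
    rw [List.perm_ext_iff_of_nodup hn (Finset.nodup_toList _)]
    simp

lemma LS_length {A : Finset ℕ} {l : List ℕ} (hl : l ∈ LS A) : l.length = A.card := by
  rw [mem_LS] at hl
  rw [← hl.2, List.toFinset_card_of_nodup hl.1]

lemma LS_empty : LS ∅ = {[]} := by
  ext l; rw [mem_LS]; simp
  rintro rfl; simp

lemma LS_mem {A : Finset ℕ} {l : List ℕ} (hl : l ∈ LS A) (x : ℕ) : x ∈ l ↔ x ∈ A := by
  rw [mem_LS] at hl
  rw [← hl.2]; simp

lemma sum_LS (A : Finset ℕ) (m : ℕ) (hm : m ∈ A) (F : List ℕ → ℝ) :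
    ∑ l ∈ LS A, F l = ∑ B ∈ (A.erase m).powerset, ∑ L ∈ LS B, ∑ R ∈ LS ((A.erase m) \ B),
      F (L ++ m :: R) := by
  have e : ∀ B, ∑ L ∈ LS B, ∑ R ∈ LS ((A.erase m) \ B), F (L ++ m :: R) =
      ∑ p ∈ LS B ×ˢ LS ((A.erase m) \ B), F (p.1 ++ m :: p.2) := fun B => by
    rw [Finset.sum_product]
  simp_rw [e]
  rw [Finset.sum_sigma']
  symm
  have key : ∀ p ∈ (A.erase m).powerset.sigma (fun B => LS B ×ˢ LS ((A.erase m) \ B)),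
      m ∉ p.2.1 ∧ m ∉ p.2.2 ∧ p.2.1.toFinset = p.1 := by
    rintro ⟨B, L, R⟩ hp
    simp only [Finset.mem_sigma, Finset.mem_powerset, Finset.mem_product] at hp
    obtain ⟨hB, hL, hR⟩ := hp
    refine ⟨?_, ?_, (mem_LS.mp hL).2⟩
    · simp only [LS_mem hL]
      intro h; have := hB h; simp at this
    · simp only [LS_mem hR]; simp
  apply Finset.sum_bij (fun p _ => p.2.1 ++ m :: p.2.2)
  · intro p hp
    obtain ⟨k1, k2, k3⟩ := key p hp
    obtain ⟨B, L, R⟩ := p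
    simp only [Finset.mem_sigma, Finset.mem_powerset, Finset.mem_product] at hp k1 k2 k3
    obtain ⟨hB, hL, hR⟩ := hp
    rw [mem_LS]
    have nL := (mem_LS.mp hL).1
    have nR := (mem_LS.mp hR).1
    constructor
    · simp only [List.nodup_append, List.nodup_cons, nL, nR, k2, not_false_eq_true, true_and]
      intro a ha b hb hab
      subst hab
      rcases List.mem_cons.mp hb with rfl | hb
      · exact k1 ha
      · rw [LS_mem hL] at ha
        rw [LS_mem hR] at hb
        simp at hb; tauto
    · ext x
      simp only [List.toFinset_append, List.toFinset_cons, Finset.mem_union, Finset.mem_insert,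
        List.mem_toFinset, LS_mem hL, LS_mem hR, Finset.mem_sdiff, Finset.mem_erase]
      constructor
      · rintro (h | rfl | h)
        · exact Finset.mem_of_mem_erase (hB h)
        · exact hm
        · exact h.1.2
      · intro h; tauto
  · intro p hp q hq hpq
    obtain ⟨k1, k2, k3⟩ := key p hp
    obtain ⟨k1', k2', k3'⟩ := key q hq
    obtain ⟨B, L, R⟩ := p
    obtain ⟨B', L', R'⟩ := q
    simp only at k1 k2 k3 k1' k2' k3' hpq
    have : L = L' ∧ R = R' := by
      clear hp hq k3 k3' key
      induction L generalizing L' with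
      | nil =>
        cases L' with
        | nil => simpa using hpq
        | cons a L' => simp at hpq; simp [hpq.1] at k1'
      | cons b L ih =>
        cases L' with
        | nil => simp at hpq; simp [hpq.1] at k1
        | cons a L' =>
          simp only [List.cons_append, List.cons.injEq] at hpq
          simp only [List.mem_cons, not_or] at k1 k1'
          obtain ⟨h1, h2⟩ := ih k1.2 L' k1'.2 hpq.2
          exact ⟨by rw [hpq.1, h1], h2⟩
    obtain ⟨rfl, rfl⟩ := this
    rw [k3] at k3'
    subst k3'
    rfl
  · intro l hl
    have hml : m ∈ l := (LS_mem hl m).mpr hm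
    obtain ⟨L, R, rfl⟩ := List.append_of_mem hml
    rw [mem_LS] at hl
    obtain ⟨hn, hA⟩ := hl
    have hn' := hn
    rw [List.nodup_append, List.nodup_cons] at hn
    obtain ⟨nL, ⟨mR, nR⟩, hd⟩ := hn
    have mL : m ∉ L := fun h => hd m h m (by simp) rfl
    have hx : ∀ x, x ∈ A ↔ x ∈ L ∨ x = m ∨ x ∈ R := by intro x; rw [← hA]; simp; tauto
    refine ⟨⟨L.toFinset, L, R⟩, ?_, rfl⟩
    simp only [Finset.mem_sigma, Finset.mem_powerset, Finset.mem_product, mem_LS]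
    refine ⟨?_, ⟨nL, trivial⟩, nR, ?_⟩
    · intro x hx'
      rw [List.mem_toFinset] at hx'
      rw [Finset.mem_erase, hx]
      exact ⟨fun h => mL (h ▸ hx'), Or.inl hx'⟩
    · ext x
      simp only [List.mem_toFinset, Finset.mem_sdiff, Finset.mem_erase, hx]
      constructor
      · intro h
        exact ⟨⟨fun e => mR (e ▸ h), Or.inr (Or.inr h)⟩, fun h' => hd x h' x (by simp [h]) rfl⟩
      · tauto
  · intro p hp; rfl

/-- Number of arrangements of `A` with given peak word. -/
noncomputable def NN (A : Finset ℕ) (β : List Bool) : ℝ :=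
  ∑ l ∈ LS A, if pk l = β then 1 else 0

/-- The same, vanishing on the empty set. -/
noncomputable def NP (A : Finset ℕ) (β : List Bool) : ℝ := if A = ∅ then 0 else NN A β

lemma NN_length (A : Finset ℕ) (β : List Bool) (hβ : A.card ≠ β.length) : NN A β = 0 := by
  unfold NN
  apply Finset.sum_eq_zero
  intro l hl
  rw [if_neg]
  rintro rfl
  rw [pk_length, LS_length hl] at hβ
  exact hβ rfl

lemma sp_ind (x y β : List Bool) : (if x ++ true :: y = β then (1 : ℝ) else 0) =
    sp β (fun a r => (if x = a then 1 else 0) * (if y = r then 1 else 0)) := by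
  induction β generalizing x with
  | nil => simp [sp]
  | cons b β ih =>
    cases x with
    | nil =>
      rw [sp, sp_congr β _ (fun _ _ => 0), sp_zero]
      · cases b <;> simp
      · intro a r _; simp
    | cons c x =>
      rw [sp]
      by_cases hc : c = b
      · subst hc
        simp [ih x]
      · rw [sp_congr β _ (fun _ _ => 0), sp_zero]
        · simp [hc]
        · intro a r _; simp [hc]

lemma fst_ind (A : Finset ℕ) (β : List Bool) :
    ∑ R ∈ LS A, (if false :: pk R = β then (1 : ℝ) else 0) = fstT (NN A) β := by
  match β with
  | [] => simp
  | true :: β => simp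
  | false :: β => simp [NN]

lemma lst_ind (A : Finset ℕ) (β : List Bool) :
    ∑ R ∈ LS A, (if pk R ++ [false] = β then (1 : ℝ) else 0) = lstT (NN A) β := by
  rcases List.eq_nil_or_concat' β with rfl | ⟨β, b, rfl⟩
  · simp
  · cases b <;> simp [NN]

lemma sp_mul_sum (A B : Finset ℕ) (β : List Bool) :
    ∑ L ∈ LS A, ∑ R ∈ LS B, (if pk L ++ true :: pk R = β then (1 : ℝ) else 0) =
      sp β (fun a r => NN A a * NN B r) := by
  simp_rw [sp_ind, sp_sum, NN, Finset.sum_mul_sum]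

lemma NN_rec (A : Finset ℕ) (m : ℕ) (hm : m ∈ A) (hmax : ∀ x ∈ A, x ≤ m)
    (hA : (A.erase m).Nonempty) (β : List Bool) :
    NN A β = sp β (fun a r => ∑ B ∈ (A.erase m).powerset, NP B a * NP ((A.erase m) \ B) r) +
      fstT (NN (A.erase m)) β + lstT (NN (A.erase m)) β := by
  set A' := A.erase m with hA'
  have lt : ∀ x ∈ A', x < m := by
    intro x hx
    rw [hA', Finset.mem_erase] at hx
    exact lt_of_le_of_ne (hmax x hx.2) hx.1
  rw [NN, sum_LS A m hm, ← hA']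
  have G : ∀ B ∈ A'.powerset, ∑ L ∈ LS B, ∑ R ∈ LS (A' \ B),
      (if pk (L ++ m :: R) = β then (1 : ℝ) else 0) =
      sp β (fun a r => NP B a * NP (A' \ B) r) + ((if B = ∅ then fstT (NN A') β else 0) +
        (if B = A' then lstT (NN A') β else 0)) := by
    intro B hB
    rw [Finset.mem_powerset] at hB
    by_cases h1 : B = ∅
    · subst h1
      rw [if_pos rfl, if_neg hA.ne_empty.symm, LS_empty, Finset.sum_singleton, Finset.sdiff_empty,
        sp_congr β _ (fun _ _ => 0), sp_zero, zero_add, add_zero, ← fst_ind]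
      · apply Finset.sum_congr rfl
        intro R hR
        rw [List.nil_append, pk_first m R (fun x hx => lt x ((LS_mem hR x).mp hx))]
      · intro a r _; simp [NP]
    by_cases h2 : B = A'
    · subst h2
      rw [if_pos rfl, if_neg h1, sp_congr β _ (fun _ _ => 0), sp_zero, zero_add, zero_add, ← lst_ind,
        Finset.sdiff_self, LS_empty]
      · apply Finset.sum_congr rfl
        intro R hR
        rw [Finset.sum_singleton, pk_last m R (fun x hx => lt x ((LS_mem hR x).mp hx))]
      · intro a r _; simp [NP]
    have h3 : A' \ B ≠ ∅ := by
      intro h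
      rw [Finset.sdiff_eq_empty_iff_subset] at h
      exact h2 (Finset.Subset.antisymm hB h)
    rw [if_neg h1, if_neg h2, add_zero, add_zero]
    simp only [NP, if_neg h1, if_neg h3]
    rw [← sp_mul_sum]
    apply Finset.sum_congr rfl
    intro L hL
    apply Finset.sum_congr rfl
    intro R hR
    rw [pk_mid m L R (fun x hx => lt x (hB ((LS_mem hL x).mp hx)))
      (fun x hx => lt x (Finset.sdiff_subset ((LS_mem hR x).mp hx)))]
    · rintro rfl
      have := LS_length hL
      rw [List.length_nil, eq_comm, Finset.card_eq_zero] at this; exact h1 this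
    · rintro rfl
      have := LS_length hR
      rw [List.length_nil, eq_comm, Finset.card_eq_zero] at this
      exact h3 this
  rw [Finset.sum_congr rfl G, Finset.sum_add_distrib, Finset.sum_add_distrib, sp_sum,
    Finset.sum_ite_eq' , Finset.sum_ite_eq', if_pos (by simp), if_pos (by simp), add_assoc]

lemma NN_eq (A : Finset ℕ) (hA : A.Nonempty) (β : List Bool) (hβ : A.card = β.length) :
    NN A β = (A.card.factorial : ℝ) * h β := by
  induction hn : A.card using Nat.strong_induction_on generalizing A β with
  | _ n ih =>
  subst hn
  set m := A.max' hA with hm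
  have hmA : m ∈ A := A.max'_mem hA
  by_cases hA' : (A.erase m).Nonempty
  swap
  · rw [Finset.not_nonempty_iff_eq_empty] at hA'
    have hAm : A = {m} := by
      rw [← Finset.insert_erase hmA, hA']; simp
    rw [hAm] at hβ ⊢
    rw [Finset.card_singleton] at hβ ⊢
    have hs : LS {m} = {[m]} := by
      ext l
      rw [Finset.mem_singleton]
      constructor
      · intro hl
        have hlen := LS_length hl
        rw [Finset.card_singleton, List.length_eq_one_iff] at hlen
        obtain ⟨a, rfl⟩ := hlen
        have := LS_mem hl a
        simpa using this
      · rintro rfl; rw [mem_LS]; simp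
    obtain ⟨b, rfl⟩ := List.length_eq_one_iff.mp hβ.symm
    rw [NN, hs, Finset.sum_singleton]
    cases b <;> simp [pk, pkA]
  have hc : (A.erase m).card + 1 = A.card := Finset.card_erase_add_one hmA
  have hc0 : 0 < (A.erase m).card := hA'.card_pos
  set A' := A.erase m with hA'd
  have key : ∀ B : Finset ℕ, B.card < A.card → ∀ a : List Bool,
      NP B a = if B.card = a.length then (a.length.factorial : ℝ) * h a else 0 := by
    intro B hB a
    unfold NP
    by_cases h0 : B = ∅
    · subst h0
      rw [if_pos rfl]
      split_ifs with h1
      · have : a = [] := by simpa using h1.symm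
        simp [this]
      · rfl
    · rw [if_neg h0]
      split_ifs with h1
      · rw [ih B.card hB B (Finset.nonempty_iff_ne_empty.mpr h0) a h1 rfl, h1]
      · exact NN_length B a h1
  rw [NN_rec A m hmA (fun x hx => A.le_max' x hx) hA' β, ← hA'd]
  have s1 : sp β (fun a r => ∑ B ∈ A'.powerset, NP B a * NP (A' \ B) r) =
      (A'.card.factorial : ℝ) * sp β (fun a r => h a * h r) := by
    rw [← sp_mul]
    apply sp_congr
    intro a r e
    have hl := congrArg List.length e
    simp only [List.length_append, List.length_cons] at hl
    have : ∀ B ∈ A'.powerset, NP B a * NP (A' \ B) r =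
        if B.card = a.length then ((a.length.factorial : ℝ) * h a) * (r.length.factorial * h r) else 0 := by
      intro B hB
      rw [Finset.mem_powerset] at hB
      have c1 := Finset.card_le_card hB
      have c2 := Finset.card_sdiff_of_subset hB
      rw [key B (by omega), key (A' \ B) (by omega)]
      by_cases h1 : B.card = a.length
      · rw [if_pos h1, if_pos h1, if_pos (by omega)]
      · rw [if_neg h1, if_neg h1, zero_mul]
    rw [Finset.sum_congr rfl this, ← Finset.sum_filter, Finset.sum_const, nsmul_eq_mul,
      ← Finset.powersetCard_eq_filter, Finset.card_powersetCard]
    have hch : A'.card.choose a.length * a.length.factorial * r.length.factorial = A'.card.factorial := by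
      have := Nat.choose_mul_factorial_mul_factorial (n := A'.card) (k := a.length) (by omega)
      rwa [show A'.card - a.length = r.length by omega] at this
    rw [← hch]; push_cast; ring
  have s2 : fstT (NN A') β = (A'.card.factorial : ℝ) * fstT h β := by
    match β with
    | [] => simp
    | true :: β => simp
    | false :: β =>
      simp only [fstT_false]
      rw [List.length_cons] at hβ
      exact ih A'.card (by omega) A' hA' β (by omega) rfl
  have s3 : lstT (NN A') β = (A'.card.factorial : ℝ) * lstT h β := by
    rcases List.eq_nil_or_concat' β with rfl | ⟨β, b, rfl⟩
    · simp
    · cases b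
      · simp only [lstT_false]
        rw [List.length_append] at hβ
        simp only [List.length_cons, List.length_nil] at hβ
        exact ih A'.card (by omega) A' hA' β (by omega) rfl
      · simp
  rw [s1, s2, s3, ← mul_add, ← mul_add, ← h_rec β (by omega), ← hβ, ← hc, Nat.factorial_succ]
  push_cast; ring

lemma pkA_get : ∀ (a : ℕ) (l : List ℕ) (j : ℕ), (pkA a l)[j]? = some true ↔
    ∃ x y z, (a :: l)[j]? = some x ∧ (a :: l)[j+1]? = some y ∧ (a :: l)[j+2]? = some z ∧
      x < y ∧ z < y
  | a, [], j => by simp [pkA]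
  | a, [b], j => by
    cases j <;> simp [pkA]
  | a, b :: c :: l, 0 => by simp [pkA]
  | a, b :: c :: l, j + 1 => by
    have := pkA_get b (c :: l) j
    simpa [pkA] using this

lemma pk_get (l : List ℕ) (j : ℕ) : (pk l)[j]? = some true ↔
    ∃ x y z, 1 ≤ j ∧ l[j-1]? = some x ∧ l[j]? = some y ∧ l[j+1]? = some z ∧
      x < y ∧ z < y := by
  cases l with
  | nil => simp [pk]
  | cons a l =>
    cases j with
    | zero => simp [pk]
    | succ j => 
      have := pkA_get a l j
      simpa [pk] using this

/-- Word of a composition. -/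
def bc : List ℕ → List Bool
  | [] => []
  | [x] => List.replicate x false
  | x :: y :: l => List.replicate (x - 1) false ++ true :: bc (y :: l)

lemma bc_length : ∀ (c : List ℕ), (∀ x ∈ c, 0 < x) → (bc c).length = c.sum
  | [], _ => rfl
  | [x], _ => by simp [bc]
  | x :: y :: l, H => by
    have := bc_length (y :: l) (fun z hz => H z (by simp at hz ⊢; tauto))
    have hx := H x (by simp)
    simp only [bc, List.length_append, List.length_replicate, List.length_cons, this, List.sum_cons]
    omega

lemma compPeaks_cons (x y : ℕ) (l : List ℕ) (i : ℕ) : i ∈ compPeaks (x :: y :: l) ↔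
    i = x ∨ ∃ j ∈ compPeaks (y :: l), i = x + j := by
  simp only [compPeaks, Finset.mem_image, Finset.mem_range, List.length_cons]
  constructor
  · rintro ⟨a, ha, rfl⟩
    cases a with
    | zero => left; simp
    | succ a =>
      right
      exact ⟨_, ⟨a, by omega, rfl⟩, by simp⟩
  · rintro (rfl | ⟨j, ⟨a, ha, rfl⟩, rfl⟩)
    · exact ⟨0, by omega, by simp⟩
    · exact ⟨a + 1, by omega, by simp⟩

lemma compPeaks_pos : ∀ (c : List ℕ), (∀ x ∈ c, 0 < x) → ∀ i ∈ compPeaks c, 0 < i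
  | [], _, i, hi => by simp [compPeaks] at hi
  | [x], _, i, hi => by simp [compPeaks] at hi
  | x :: y :: l, H, i, hi => by
    have hx := H x (by simp)
    rw [compPeaks_cons] at hi
    rcases hi with rfl | ⟨j, _, rfl⟩ <;> omega

lemma bc_get : ∀ (c : List ℕ) (i : ℕ), (∀ x ∈ c, 0 < x) →
    ((bc c)[i]? = some true ↔ i + 1 ∈ compPeaks c)
  | [], i, _ => by simp [bc, compPeaks]
  | [x], i, _ => by
    simp [bc, compPeaks, List.getElem?_replicate]
  | x :: y :: l, i, H => by
    have H' : ∀ z ∈ y :: l, 0 < z := fun z hz => H z (by simp at hz ⊢; tauto)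
    have hx := H x (by simp)
    rw [compPeaks_cons, bc]
    rcases lt_trichotomy i (x - 1) with h1 | h1 | h1
    · rw [List.getElem?_append_left (by simpa using h1), List.getElem?_replicate, if_pos h1]
      simp only [Option.some.injEq, Bool.false_eq_true, false_iff, not_or, not_exists, not_and]
      constructor
      · omega
      · intro j _; omega
    · subst h1
      rw [List.getElem?_append_right (by simp)]
      simp; left; omega
    · obtain ⟨j, rfl⟩ : ∃ j, i = x + j := ⟨i - x, by omega⟩
      rw [List.getElem?_append_right (by simp; omega)]
      rw [List.length_replicate, show x + j - (x - 1) = j + 1 by omega, List.getElem?_cons_succ,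
        bc_get (y :: l) j H']
      constructor
      · intro hj; exact Or.inr ⟨j + 1, hj, by omega⟩
      · rintro (h | ⟨k, hk, e⟩)
        · omega
        · rwa [show j + 1 = k by omega]

lemma rep_inj : ∀ (a b : ℕ) (u v : List Bool),
    List.replicate a false ++ true :: u = List.replicate b false ++ true :: v → a = b ∧ u = v
  | 0, 0, u, v, e => by simpa using e
  | 0, b + 1, u, v, e => by simp [List.replicate_succ] at e
  | a + 1, 0, u, v, e => by simp [List.replicate_succ] at e
  | a + 1, b + 1, u, v, e => by
    simp only [List.replicate_succ, List.cons_append, List.cons.injEq, true_and] at e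
    have := rep_inj a b u v e
    exact ⟨by omega, this.2⟩

lemma bc_ne_rep (n x y : ℕ) (l : List ℕ) : List.replicate n false ≠ bc (x :: y :: l) := by
  intro e
  have : true ∈ List.replicate n false := by rw [e]; simp [bc]
  rw [List.mem_replicate] at this
  simp at this

lemma bc_inj : ∀ (c d : List ℕ), c ≠ [] → d ≠ [] → (∀ x ∈ c, 0 < x) → (∀ x ∈ d, 0 < x) →
    bc c = bc d → c = d
  | [], _, h, _, _, _, _ => absurd rfl h
  | _, [], _, h, _, _, _ => absurd rfl h
  | [x], [y], _, _, _, _, e => by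
    have := congrArg List.length e
    simpa [bc] using this
  | [x], y :: z :: l, _, _, _, _, e => absurd e (bc_ne_rep x y z l)
  | y :: z :: l, [x], _, _, _, _, e => absurd e.symm (bc_ne_rep x y z l)
  | x :: y :: l, x' :: y' :: l', _, _, H, H', e => by
    have hx := H x (by simp)
    have hx' := H' x' (by simp)
    obtain ⟨e1, e2⟩ := rep_inj _ _ _ _ e
    have := bc_inj (y :: l) (y' :: l') (by simp) (by simp)
      (fun z hz => H z (by simp at hz ⊢; tauto)) (fun z hz => H' z (by simp at hz ⊢; tauto)) e2
    rw [this, show x = x' by omega]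

/-- Word of a permutation. -/
def wd {n : ℕ} (σ : Equiv.Perm (Fin n)) : List ℕ := List.ofFn (fun i => (σ i : ℕ))

lemma wd_length {n : ℕ} (σ : Equiv.Perm (Fin n)) : (wd σ).length = n := by simp [wd]

lemma wd_get {n : ℕ} (σ : Equiv.Perm (Fin n)) (j x : ℕ) :
    (wd σ)[j]? = some x ↔ ∃ hj : j < n, (σ ⟨j, hj⟩ : ℕ) = x := by
  unfold wd
  rw [List.getElem?_ofFn]
  split_ifs with hj <;> simp [hj]

lemma mem_peakSet {n : ℕ} (σ : Equiv.Perm (Fin n)) (i : ℕ) :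
    i ∈ peakSet σ ↔ i < n ∧ IsPeak σ i := by
  classical
  unfold peakSet
  rw [Finset.mem_filter, Finset.mem_range]

lemma wd_peak {n : ℕ} (σ : Equiv.Perm (Fin n)) (i : ℕ) :
    (pk (wd σ))[i]? = some true ↔ i + 1 ∈ peakSet σ := by
  rw [pk_get]
  rw [mem_peakSet, IsPeak]
  simp only [wd_get]
  constructor
  · rintro ⟨x, y, z, h1, ⟨h2, rfl⟩, ⟨h3, rfl⟩, ⟨h4, rfl⟩, h5, h6⟩
    exact ⟨h4, by omega, h4, h5, h6⟩
  · rintro ⟨h1, h2, h3, h4, h5⟩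
    exact ⟨_, _, _, by omega, ⟨by omega, rfl⟩, ⟨by omega, rfl⟩, ⟨h3, rfl⟩, h4, h5⟩

lemma wd_iff (c : List ℕ) (H : ∀ x ∈ c, 0 < x) (σ : Equiv.Perm (Fin c.sum)) :
    pk (wd σ) = bc c ↔ peakSet σ = compPeaks c := by
  have key : pk (wd σ) = bc c ↔ ∀ i : ℕ, ((pk (wd σ))[i]? = some true ↔ (bc c)[i]? = some true) := by
    constructor
    · intro e i; rw [e]
    · intro e
      apply List.ext_getElem
      · rw [pk_length, wd_length, bc_length c H]
      · intro i h1 h2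
        have := e i
        rw [List.getElem?_eq_getElem h1, List.getElem?_eq_getElem h2] at this
        simp only [Option.some.injEq] at this
        exact Bool.eq_iff_iff.mpr this
  rw [key]
  simp only [wd_peak, bc_get c _ H]
  constructor
  · intro e
    ext i
    cases i with
    | zero =>
      constructor
      · intro h0
        rw [mem_peakSet] at h0
        obtain ⟨_, h2, _⟩ := h0
        omega
      · intro h0
        exact absurd (compPeaks_pos c H 0 h0) (by omega)
    | succ i => exact e i
  · intro e i; rw [e]

lemma wd_inj {n : ℕ} (σ τ : Equiv.Perm (Fin n)) (e : wd σ = wd τ) : σ = τ := by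
  have := List.ofFn_injective e
  ext i
  exact congrFun this i

lemma wd_mem {n : ℕ} (σ : Equiv.Perm (Fin n)) : wd σ ∈ LS (Finset.range n) := by
  rw [mem_LS]
  constructor
  · unfold wd
    rw [List.nodup_ofFn]
    intro i j e
    exact σ.injective (Fin.ext e)
  · ext x
    simp only [wd, List.mem_toFinset, List.mem_ofFn, Finset.mem_range]
    constructor
    · rintro ⟨i, rfl⟩; exact (σ i).2
    · intro hx
      exact ⟨σ.symm ⟨x, hx⟩, by simp⟩

lemma wd_surj {n : ℕ} (l : List ℕ) (hl : l ∈ LS (Finset.range n)) :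
    ∃ σ : Equiv.Perm (Fin n), wd σ = l := by
  have hlen := LS_length hl
  rw [Finset.card_range] at hlen
  have hlt : ∀ i : Fin n, l[i.1]'(by omega) < n := fun i => by
    have := (LS_mem hl _).mp (List.getElem_mem (l := l) (n := i.1) (by omega))
    simpa using this
  let f : Fin n → Fin n := fun i => ⟨l[i.1]'(by omega), hlt i⟩
  have hf : Function.Injective f := by
    intro i j e
    have e' := Fin.mk.inj_iff.mp e
    have := (List.Nodup.getElem_inj_iff (mem_LS.mp hl).1).mp e'
    exact Fin.ext this
  refine ⟨Equiv.ofBijective f (Finite.injective_iff_bijective.mp hf), ?_⟩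
  apply List.ext_getElem
  · rw [wd_length, hlen]
  · intro i h1 h2
    simp [wd, f]

lemma Pcomp_eq (c : List ℕ) (H : ∀ x ∈ c, 0 < x) (h0 : 0 < c.sum) :
    (Pcomp c : ℝ) = (c.sum.factorial : ℝ) * h (bc c) := by
  have e := NN_eq (Finset.range c.sum) (by simp; omega) (bc c) (by simp [bc_length c H])
  rw [Finset.card_range] at e
  rw [← e, NN, ← Finset.sum_filter, Finset.sum_const, nsmul_eq_mul, mul_one, Pcomp, numPeakSet]
  congr 1
  classical
  rw [Nat.card_eq_fintype_card, Fintype.card_subtype]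
  apply Finset.card_bij (fun σ _ => wd σ)
  · intro σ hσ
    simp only [Finset.mem_filter, Finset.mem_univ, true_and] at hσ ⊢
    exact ⟨wd_mem σ, (wd_iff c H σ).mpr hσ⟩
  · intro σ _ τ _ e; exact wd_inj σ τ e
  · intro l hl
    rw [Finset.mem_filter] at hl
    obtain ⟨σ, rfl⟩ := wd_surj l hl.1
    exact ⟨σ, by simpa using (wd_iff c H σ).mp hl.2, rfl⟩

lemma pre_length (k : ℕ) : (pre k).length = 3 * k := by
  induction k with
  | zero => rfl
  | succ k ih => simp [pre, ih]; omega

lemma bc_33 (k : ℕ) : bc (List.replicate (k + 1) 3) = pre k ++ [false, false, false] := by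
  induction k with
  | zero => rfl
  | succ k ih =>
    rw [List.replicate_succ, List.replicate_succ, bc, ← List.replicate_succ, ih]
    rfl

lemma bc_32 (k : ℕ) : bc (List.replicate k 3 ++ [2]) = pre k ++ [false, false] := by
  induction k with
  | zero => rfl
  | succ k ih =>
    cases k with
    | zero => rfl
    | succ k =>
      rw [List.replicate_succ, List.replicate_succ, List.cons_append, List.cons_append, bc,
        ← List.cons_append, ← List.replicate_succ, ih]
      rfl

lemma bc_432 (k : ℕ) : bc (4 :: (List.replicate k 3 ++ [2])) =
    false :: (pre (k + 1) ++ [false, false]) := by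
  rw [pre]
  simp only [List.cons_append]
  rw [← bc_32]
  cases k with
  | zero => rfl
  | succ k => rfl

lemma X_le (b : List ℕ) (k : ℕ) (H : ∀ x ∈ b, 0 < x) (hs : b.sum = 3 * (k + 2)) :
    X (bc b) ≤ 9 / 5 ∧ (X (bc b) = 9 / 5 →
      bc b = bc (List.replicate (k + 2) 3) ∨ bc b = bc (4 :: (List.replicate k 3 ++ [2]))) := by
  have hl := bc_length b H
  rw [hs] at hl
  rcases good (bc b) with ⟨j, e, -⟩ | e | ⟨j, -, e, e'⟩ | e
  · rw [e] at hl; simp [pre_length] at hl; omega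
  · rw [e] at hl; simp at hl
  · refine ⟨e'.le, fun _ => ?_⟩
    rw [bc_33, bc_432]
    rcases e with e | e
    · right
      rw [e] at hl; simp [pre_length] at hl
      rw [e, show j = k + 1 by omega]
    · left
      rw [e] at hl; simp [pre_length] at hl
      rw [e, show j = k + 1 by omega]
  · exact ⟨e.le, fun h => absurd h e.ne⟩

lemma Pcomp_X (c : List ℕ) (n : ℕ) (H : ∀ x ∈ c, 0 < x) (h0 : 0 < n) (hs : c.sum = n) :
    (Pcomp c : ℝ) * t ^ n = (n.factorial : ℝ) * X (bc c) := by
  rw [Pcomp_eq c H (by omega), X, bc_length c H, hs]; ring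

lemma Pcomp_le (b c : List ℕ) (n : ℕ) (Hb : ∀ x ∈ b, 0 < x) (Hc : ∀ x ∈ c, 0 < x) (h0 : 0 < n)
    (hb : b.sum = n) (hc : c.sum = n) : Pcomp b ≤ Pcomp c ↔ X (bc b) ≤ X (bc c) := by
  have e1 := Pcomp_X b n Hb h0 hb
  have e2 := Pcomp_X c n Hc h0 hc
  have tp : 0 < t ^ n := pow_pos t_pos n
  have fp : (0 : ℝ) < n.factorial := by exact_mod_cast n.factorial_pos
  rw [← Nat.cast_le (α := ℝ), ← mul_le_mul_iff_left₀ tp, e1, e2, mul_le_mul_iff_right₀ fp]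

theorem main (k : ℕ) (c : List ℕ) (hc : IsComposition (3 * (k + 2)) c) :
    IsMaximal c ↔
      c = List.replicate (k + 2) 3 ∨ c = 4 :: (List.replicate k 3 ++ [2]) := by
  obtain ⟨Hc, sc⟩ := hc
  have H3 : ∀ x ∈ List.replicate (k + 2) 3, 0 < x := by
    intro x hx; rw [List.mem_replicate] at hx; omega
  have S3 : (List.replicate (k + 2) 3).sum = 3 * (k + 2) := by rw [List.sum_replicate, smul_eq_mul, mul_comm]
  have H4 : ∀ x ∈ 4 :: (List.replicate k 3 ++ [2]), 0 < x := by
    intro x hx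
    simp only [List.mem_cons, List.mem_append, List.mem_replicate, List.not_mem_nil, or_false] at hx
    omega
  have X3 : X (bc (List.replicate (k + 2) 3)) = 9 / 5 := by rw [bc_33, X_ext']
  have X4 : X (bc (4 :: (List.replicate k 3 ++ [2]))) = 9 / 5 := by rw [bc_432, X_ext]
  have hX := X_le c k Hc sc
  have step : IsMaximal c ↔ X (bc c) = 9 / 5 := by
    constructor
    · intro hm
      have := hm (List.replicate (k + 2) 3) ⟨H3, by rw [S3, sc]⟩
      rw [Pcomp_le _ _ (3 * (k + 2)) H3 Hc (by omega) S3 sc, X3] at this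
      exact le_antisymm hX.1 this
    · intro hx b hb
      rw [IsComposition, sc] at hb
      rw [Pcomp_le _ _ (3 * (k + 2)) hb.1 Hc (by omega) hb.2 sc, hx]
      exact (X_le b k hb.1 hb.2).1
  have c0 : c ≠ [] := by rintro rfl; simp at sc
  rw [step]
  constructor
  · intro hx
    rcases hX.2 hx with e | e
    · exact Or.inl (bc_inj _ _ c0 (by simp [List.replicate_succ]) Hc H3 e)
    · exact Or.inr (bc_inj _ _ c0 (by simp) Hc H4 e)
  · rintro (rfl | rfl)
    · exact X3
    · exact X4

end PeakMax

theorem most_frequent_peak_set_mod_zero (ℓ n : ℕ) (hℓ : 2 ≤ ℓ) (hn : n = 3 * ℓ)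
    (c : List ℕ) (hc : IsComposition n c) :
    IsMaximal c ↔
      c = List.replicate ℓ 3 ∨ c = 4 :: (List.replicate (ℓ - 2) 3 ++ [2]) := by
  obtain ⟨k, rfl⟩ : ∃ k, ℓ = k + 2 := ⟨ℓ - 2, by omega⟩
  subst hn
  exact PeakMax.main k c hc
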